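/- Let Ψ(u) = αu + βu² + ∫_{(0,∞)} (e^{−ux} − 1 + ux) π(dx) be a branching mechanism and let Φ be the unique solution of ∂_t Φ(t,q) = −Ψ(Φ(t,q)), Φ(0,q) = q, for t > 0, q ∈ (0,∞). For t > 0 let b_t = lim_{q→∞} ∂_q Φ(t,q) (this limit exists since q ↦ ∂_q Φ(t,q) is nonnegative and nonincreasing). Then the following are equivalent: (a) b_t = 0 for some t > 0; (b) b_t = 0 for all t > 0; (c) lim_{u→∞} Ψ′(u) = ∞. -/

import Mathlib

open MeasureTheory Set Filter

noncomputable section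

/-!
If `p < q`, the difference `D = Φ(·, q) - Φ(·, p)` satisfies `D' = -(Ψ(Φ(·, q)) - Ψ(Φ(·, p)))`.
By convexity of `Ψ`, an upper bound `L` for `Ψ'` along the trajectories gives
`D(t) ≥ exp(-Lt) (q - p)`, and a lower bound `M` gives `D(t) ≤ exp(-Mt) (q - p)`. If `Ψ'` is
bounded, the first estimate gives `b_t ≥ exp(-Lt) > 0`. If `Ψ' → ∞` and `b_t > 0`, then
`Φ(t, q) → ∞` as `q → ∞`; as `Ψ` is eventually positive, trajectories ending high have stayed high
all along, so the second estimate holds for large `p`, with `M` as large as we like, and `b_t = 0`.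
-/

open scoped Topology

section Comparison

variable {f f' : ℝ → ℝ} {a b K : ℝ}

theorem mul_exp_le_of_mul_le_deriv_right_of_pos (hab : a ≤ b) (hf : ContinuousOn f (Icc a b))
    (hf' : ∀ x ∈ Ico a b, HasDerivWithinAt f (f' x) (Ici x) x) (ha : 0 < f a)
    (bound : ∀ x ∈ Ico a b, 0 < f x → K * f x ≤ f' x) :
    f a * Real.exp (K * (b - a)) ≤ f b := by
  -- The fencing theorem needs a strict inequality, hence a rate `k < K` and the limit `k → K`.
  have of_lt : ∀ k < K, f a * Real.exp (k * (b - a)) ≤ f b := fun k hk => by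
    let g : ℝ → ℝ := fun x => f a * Real.exp (k * (x - a))
    have hg (x : ℝ) : HasDerivAt g (k * g x) x := by
      have h := ((((hasDerivAt_id x).sub_const a).const_mul k).exp).const_mul (f a)
      exact h.congr_deriv (by simp only [id, g]; ring)
    refine image_le_of_deriv_right_lt_deriv_boundary' (f := g)
      (fun x _ => (hg x).continuousAt.continuousWithinAt) (fun x _ => (hg x).hasDerivWithinAt)
      (by simp [g]) hf hf' (fun x hx hgf => ?_) (right_mem_Icc.2 hab)
    have hfx : 0 < f x := hgf ▸ (by positivity : 0 < g x)
    rw [hgf]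
    exact (mul_lt_mul_of_pos_right hk hfx).trans_le (bound x hx hfx)
  have hcont : Continuous fun k => f a * Real.exp (k * (b - a)) := by fun_prop
  exact le_of_tendsto ((hcont.tendsto K).mono_left nhdsWithin_le_nhds)
    (eventually_mem_nhdsWithin.mono of_lt : ∀ᶠ k in 𝓝[<] K, _)

theorem le_mul_exp_of_deriv_right_le_mul (hab : a ≤ b) (hf : ContinuousOn f (Icc a b))
    (hf' : ∀ x ∈ Ico a b, HasDerivWithinAt f (f' x) (Ici x) x)
    (bound : ∀ x ∈ Ico a b, f' x ≤ K * f x) :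
    f b ≤ f a * Real.exp (K * (b - a)) := by
  rw [← gronwallBound_ε0]
  exact le_gronwallBound_of_liminf_deriv_right_le hf
    (fun x hx r hr => (hf' x hx).liminf_right_slope_le hr) le_rfl
    (fun x hx => by simpa using bound x hx) b (right_mem_Icc.2 hab)

end Comparison

section DerivAtTop

variable {g : ℝ → ℝ} {a b c : ℝ}

theorem le_of_tendsto_deriv_of_monotoneOn_sub_mul
    (hg : MonotoneOn (fun x => g x - c * x) (Ioi a)) (hb : Tendsto (deriv g) atTop (𝓝 b)) :
    c ≤ b := by
  -- `deriv g` is `0` where `g` is not differentiable, so only points of differentiability count.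
  have hdense := Measure.dense_of_ae hg.ae_differentiableWithinAt_of_mem
  refine ge_of_tendsto_of_frequently hb (frequently_atTop.2 fun Q => ?_)
  obtain ⟨x, hdiff, hx⟩ := hdense.exists_mem_open isOpen_Ioi (nonempty_Ioi (a := max a Q))
  have hax : a < x := (le_max_left a Q).trans_lt hx
  have hd := (hdiff hax).differentiableAt (Ioi_mem_nhds hax)
  have hnonneg : 0 ≤ derivWithin (fun x => g x - c * x) (Ioi a) x := hg.derivWithin_nonneg
  rw [derivWithin_of_isOpen isOpen_Ioi hax] at hnonneg
  have hg' := (hd.hasDerivAt.add ((hasDerivAt_id x).const_mul c)).congr_of_eventuallyEq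
    (f₁ := g) (.of_forall fun y => by simp)
  refine ⟨x, (le_max_right a Q).trans hx.le, ?_⟩
  rw [hg'.deriv]
  linarith

theorem le_of_tendsto_deriv_of_antitoneOn_sub_mul
    (hg : AntitoneOn (fun x => g x - c * x) (Ioi a)) (hb : Tendsto (deriv g) atTop (𝓝 b)) :
    b ≤ c := by
  refine neg_le_neg_iff.1 (le_of_tendsto_deriv_of_monotoneOn_sub_mul (g := -g) (a := a) ?_ ?_)
  · exact hg.neg.congr fun x _ => by simp only [Pi.neg_apply]; ring
  · exact hb.neg.congr fun x => deriv.neg.symm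

theorem tendsto_atTop_of_eventually_le_deriv (hc : 0 < c) (h : ∀ᶠ x in atTop, c ≤ deriv g x) :
    Tendsto g atTop atTop := by
  obtain ⟨Q, hQ⟩ := eventually_atTop.1 h
  have hdiff : DifferentiableOn ℝ g (Ici Q) := fun x hx =>
    (differentiableAt_of_deriv_ne_zero (hc.trans_le (hQ x hx)).ne').differentiableWithinAt
  have hline : ∀ x, Q ≤ x → g Q + c * (x - Q) ≤ g x := fun x hx => by
    have := (convex_Ici Q).mul_sub_le_image_sub_of_le_deriv hdiff.continuousOn
      (hdiff.mono interior_subset) (fun y hy => hQ y (interior_subset hy))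
      Q self_mem_Ici x hx hx
    linarith
  refine tendsto_atTop_mono' _ ((eventually_ge_atTop Q).mono hline) ?_
  exact tendsto_atTop_add_const_left _ _
    ((tendsto_atTop_add_const_right _ (-Q) tendsto_id).const_mul_atTop hc)

end DerivAtTop

/-- A single trajectory `t ↦ Φ(t, q)` of the backward equation `∂_t Φ = -Ψ(Φ)`. The equation is
imposed at positive times only, together with continuity up to time `0`. -/
structure IsBackwardTrajectory (Ψ f : ℝ → ℝ) : Prop where
  continuousOn : ContinuousOn f (Ici 0)
  hasDerivAt : ∀ t, 0 < t → HasDerivAt f (-Ψ (f t)) t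

namespace IsBackwardTrajectory

variable {Ψ f : ℝ → ℝ} {s t K : ℝ}

theorem hasDerivWithinAt_Ici (hf : IsBackwardTrajectory Ψ f) (hΨ : ContinuousAt Ψ (f 0))
    (ht : 0 ≤ t) : HasDerivWithinAt f (-Ψ (f t)) (Ici t) t := by
  rcases ht.eq_or_lt with rfl | ht
  · have hf0 : ContinuousWithinAt f (Ioi 0) 0 :=
      (hf.continuousOn 0 self_mem_Ici).mono Ioi_subset_Ici_self
    refine hasDerivWithinAt_Ici_of_tendsto_deriv
      (fun x hx => (hf.hasDerivAt x hx).differentiableAt.differentiableWithinAt) hf0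
      self_mem_nhdsWithin ((hΨ.tendsto.comp hf0).neg.congr' ?_)
    filter_upwards [self_mem_nhdsWithin] with x hx
    exact (hf.hasDerivAt x hx).deriv.symm
  · exact (hf.hasDerivAt t ht).hasDerivWithinAt

theorem exists_forall_Icc_le (hf : IsBackwardTrajectory Ψ f) (t : ℝ) :
    ∃ K, ∀ s ∈ Icc 0 t, f s ≤ K := by
  obtain ⟨K, hK⟩ := isCompact_Icc.bddAbove_image (hf.continuousOn.mono Icc_subset_Ici_self)
  exact ⟨K, fun s hs => hK (mem_image_of_mem f hs)⟩

theorem pos (hf : IsBackwardTrajectory Ψ f) (hΨ : ContinuousAt Ψ (f 0))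
    (hlin : ∀ K, ∃ C, ∀ u ∈ Ioc 0 K, Ψ u ≤ C * u) (h0 : 0 < f 0) (ht : 0 ≤ t) : 0 < f t := by
  obtain ⟨K, hK⟩ := hf.exists_forall_Icc_le t
  obtain ⟨C, hC⟩ := hlin K
  refine lt_of_lt_of_le (by positivity) (mul_exp_le_of_mul_le_deriv_right_of_pos (K := -C) ht
    (hf.continuousOn.mono Icc_subset_Ici_self)
    (fun s hs => hf.hasDerivWithinAt_Ici hΨ hs.1) h0 fun s hs hfs => ?_)
  have := hC (f s) ⟨hfs, hK s (Ico_subset_Icc_self hs)⟩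
  linarith

theorem lt_of_lt (hf : IsBackwardTrajectory Ψ f) (hΨ : ContinuousAt Ψ (f 0)) (hK : 0 < Ψ K)
    (hs : 0 ≤ s) (hst : s ≤ t) (ht : K < f t) : K < f s := by
  by_contra! hfs
  refine ht.not_ge (image_le_of_deriv_right_lt_deriv_boundary (B := fun _ => K)
    (hf.continuousOn.mono fun x hx => hs.trans hx.1)
    (fun x hx => hf.hasDerivWithinAt_Ici hΨ (hs.trans hx.1)) hfs
    (fun x => hasDerivAt_const x K) (fun x _ hx => ?_) (right_mem_Icc.2 hst))
  rw [hx]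
  exact neg_lt_zero.2 hK

end IsBackwardTrajectory

/-- The backward flow `Φ(t, q)` of `Ψ` on `(0, ∞)`: the trajectory started at `q > 0`, required to
stay in `(0, ∞)`. The values of `Φ t q` for `q ≤ 0` or `t < 0` are arbitrary. -/
structure IsBackwardFlow (Ψ : ℝ → ℝ) (Φ : ℝ → ℝ → ℝ) : Prop where
  zero_apply : ∀ q, 0 < q → Φ 0 q = q
  pos : ∀ q, 0 < q → ∀ t, 0 ≤ t → 0 < Φ t q
  trajectory : ∀ q, 0 < q → IsBackwardTrajectory Ψ (fun t => Φ t q)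

namespace IsBackwardFlow

variable {Ψ : ℝ → ℝ} {Φ : ℝ → ℝ → ℝ} {p q t b L M : ℝ}

theorem continuousOn_sub (hΦ : IsBackwardFlow Ψ Φ) (hp : 0 < p) (hq : 0 < q) :
    ContinuousOn (fun s => Φ s q - Φ s p) (Icc 0 t) :=
  ((hΦ.trajectory q hq).continuousOn.sub (hΦ.trajectory p hp).continuousOn).mono
    Icc_subset_Ici_self

theorem continuousAt_apply_zero (hΦ : IsBackwardFlow Ψ Φ) (hΨ : ContinuousOn Ψ (Ioi 0))
    (hq : 0 < q) : ContinuousAt Ψ (Φ 0 q) :=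
  hΨ.continuousAt (Ioi_mem_nhds (hΦ.pos q hq 0 le_rfl))

theorem hasDerivWithinAt_sub (hΦ : IsBackwardFlow Ψ Φ) (hΨ : ContinuousOn Ψ (Ioi 0))
    (hp : 0 < p) (hq : 0 < q) (ht : 0 ≤ t) :
    HasDerivWithinAt (fun s => Φ s q - Φ s p) (-Ψ (Φ t q) - -Ψ (Φ t p)) (Ici t) t :=
  ((hΦ.trajectory q hq).hasDerivWithinAt_Ici (hΦ.continuousAt_apply_zero hΨ hq) ht).sub
    ((hΦ.trajectory p hp).hasDerivWithinAt_Ici (hΦ.continuousAt_apply_zero hΨ hp) ht)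

theorem mul_exp_le_sub (hΦ : IsBackwardFlow Ψ Φ) (hconv : ConvexOn ℝ (Ioi 0) Ψ)
    (hdiff : DifferentiableOn ℝ Ψ (Ioi 0)) (hp : 0 < p) (hpq : p < q) (ht : 0 ≤ t)
    (hL : ∀ s ∈ Ico 0 t, deriv Ψ (Φ s q) ≤ L) :
    (q - p) * Real.exp (-L * t) ≤ Φ t q - Φ t p := by
  have hq := hp.trans hpq
  have h := mul_exp_le_of_mul_le_deriv_right_of_pos (K := -L) ht (hΦ.continuousOn_sub hp hq)
    (fun s hs => hΦ.hasDerivWithinAt_sub hdiff.continuousOn hp hq hs.1)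
    (by simpa only [hΦ.zero_apply p hp, hΦ.zero_apply q hq, sub_pos] using hpq)
    fun s hs hsub => by
      have hqs : 0 < Φ s q := hΦ.pos q hq s hs.1
      have htangent := hconv.slope_le_deriv (hΦ.pos p hp s hs.1) hqs (sub_pos.1 hsub)
        (hdiff.differentiableAt (Ioi_mem_nhds hqs))
      rw [slope_def_field, div_le_iff₀ hsub] at htangent
      linarith [mul_le_mul_of_nonneg_right (hL s hs) hsub.le]
  simpa only [hΦ.zero_apply p hp, hΦ.zero_apply q hq, sub_zero] using h

theorem strictMonoOn (hΦ : IsBackwardFlow Ψ Φ) (hconv : ConvexOn ℝ (Ioi 0) Ψ)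
    (hdiff : DifferentiableOn ℝ Ψ (Ioi 0)) (ht : 0 ≤ t) : StrictMonoOn (Φ t) (Ioi 0) := by
  intro p hp q hq hpq
  obtain ⟨K, hK⟩ := (hΦ.trajectory q hq).exists_forall_Icc_le t
  have hK0 : 0 < K := (hΦ.pos q hq 0 le_rfl).trans_le (hK 0 (left_mem_Icc.2 ht))
  have hmono := hconv.monotoneOn_deriv fun u hu => hdiff.differentiableAt (Ioi_mem_nhds hu)
  have hsub := hΦ.mul_exp_le_sub hconv hdiff hp hpq ht fun s hs =>
    hmono (hΦ.pos q hq s hs.1) hK0 (hK s (Ico_subset_Icc_self hs))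
  exact sub_pos.1 (lt_of_lt_of_le (mul_pos (sub_pos.2 hpq) (Real.exp_pos _)) hsub)

theorem sub_le_mul_exp (hΦ : IsBackwardFlow Ψ Φ) (hconv : ConvexOn ℝ (Ioi 0) Ψ)
    (hdiff : DifferentiableOn ℝ Ψ (Ioi 0)) (hp : 0 < p) (hpq : p < q) (ht : 0 ≤ t)
    (hM : ∀ s ∈ Ico 0 t, M ≤ deriv Ψ (Φ s p)) :
    Φ t q - Φ t p ≤ (q - p) * Real.exp (-M * t) := by
  have hq := hp.trans hpq
  have h := le_mul_exp_of_deriv_right_le_mul (K := -M) ht (hΦ.continuousOn_sub hp hq)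
    (fun s hs => hΦ.hasDerivWithinAt_sub hdiff.continuousOn hp hq hs.1) fun s hs => by
      have hps : 0 < Φ s p := hΦ.pos p hp s hs.1
      have hlt : Φ s p < Φ s q := hΦ.strictMonoOn hconv hdiff hs.1 hp hq hpq
      have htangent := hconv.deriv_le_slope hps (hΦ.pos q hq s hs.1) hlt
        (hdiff.differentiableAt (Ioi_mem_nhds hps))
      rw [slope_def_field, le_div_iff₀ (sub_pos.2 hlt)] at htangent
      linarith [mul_le_mul_of_nonneg_right (hM s hs) (sub_pos.2 hlt).le]
  simpa only [hΦ.zero_apply p hp, hΦ.zero_apply q hq, sub_zero] using h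

theorem drift_nonneg (hΦ : IsBackwardFlow Ψ Φ) (hconv : ConvexOn ℝ (Ioi 0) Ψ)
    (hdiff : DifferentiableOn ℝ Ψ (Ioi 0)) (ht : 0 ≤ t)
    (hb : Tendsto (deriv (Φ t)) atTop (𝓝 b)) : 0 ≤ b :=
  le_of_tendsto_deriv_of_monotoneOn_sub_mul
    (by simpa only [zero_mul, sub_zero] using (hΦ.strictMonoOn hconv hdiff ht).monotoneOn) hb

theorem exp_le_drift (hΦ : IsBackwardFlow Ψ Φ) (hconv : ConvexOn ℝ (Ioi 0) Ψ)
    (hdiff : DifferentiableOn ℝ Ψ (Ioi 0)) (ht : 0 ≤ t)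
    (hb : Tendsto (deriv (Φ t)) atTop (𝓝 b)) (hL : ∀ u, 0 < u → deriv Ψ u ≤ L) :
    Real.exp (-L * t) ≤ b := by
  refine le_of_tendsto_deriv_of_monotoneOn_sub_mul (a := 0) (fun p hp q hq hpq => ?_) hb
  rcases hpq.eq_or_lt with rfl | hpq
  · rfl
  · have := hΦ.mul_exp_le_sub hconv hdiff hp hpq ht fun s hs => hL _ (hΦ.pos q hq s hs.1)
    linarith

theorem drift_le_exp (hΦ : IsBackwardFlow Ψ Φ) (hconv : ConvexOn ℝ (Ioi 0) Ψ)
    (hdiff : DifferentiableOn ℝ Ψ (Ioi 0)) (ht : 0 ≤ t)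
    (hb : Tendsto (deriv (Φ t)) atTop (𝓝 b)) (hΦt : Tendsto (Φ t) atTop atTop)
    (hpos : ∀ᶠ u in atTop, 0 < Ψ u) (hM : ∀ᶠ u in atTop, M ≤ deriv Ψ u) :
    b ≤ Real.exp (-M * t) := by
  obtain ⟨K, hK⟩ := eventually_atTop.1 (hpos.and hM)
  obtain ⟨Q, hQ⟩ := eventually_atTop.1 (hΦt.eventually_gt_atTop K)
  refine le_of_tendsto_deriv_of_antitoneOn_sub_mul (a := max Q 0) (fun p hp q _ hpq => ?_) hb
  rcases hpq.eq_or_lt with rfl | hpq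
  · rfl
  have hp0 : 0 < p := (le_max_right Q 0).trans_lt hp
  have hlow : ∀ s ∈ Ico 0 t, K < Φ s p := fun s hs =>
    (hΦ.trajectory p hp0).lt_of_lt (hΦ.continuousAt_apply_zero hdiff.continuousOn hp0)
      (hK K le_rfl).1 hs.1 hs.2.le (hQ p ((le_max_left Q 0).trans hp.le))
  have := hΦ.sub_le_mul_exp hconv hdiff hp0 hpq ht fun s hs => (hK _ (hlow s hs).le).2
  linarith

theorem tendsto_deriv_of_drift_eq_zero (hΦ : IsBackwardFlow Ψ Φ) (hconv : ConvexOn ℝ (Ioi 0) Ψ)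
    (hdiff : DifferentiableOn ℝ Ψ (Ioi 0)) (ht : 0 ≤ t)
    (hb : Tendsto (deriv (Φ t)) atTop (𝓝 0)) : Tendsto (deriv Ψ) atTop atTop := by
  have hmono := hconv.monotoneOn_deriv fun u hu => hdiff.differentiableAt (Ioi_mem_nhds hu)
  refine tendsto_atTop.2 fun L => ?_
  obtain ⟨w, hw, hLw⟩ : ∃ w, 0 < w ∧ L < deriv Ψ w := by
    by_contra! hL
    exact (Real.exp_pos _).not_ge (hΦ.exp_le_drift hconv hdiff ht hb hL)
  filter_upwards [eventually_ge_atTop w] with u hu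
  exact hLw.le.trans (hmono hw (hw.trans_le hu) hu)

theorem drift_eq_zero_of_tendsto_deriv (hΦ : IsBackwardFlow Ψ Φ) (hconv : ConvexOn ℝ (Ioi 0) Ψ)
    (hdiff : DifferentiableOn ℝ Ψ (Ioi 0)) (ht : 0 < t)
    (hb : Tendsto (deriv (Φ t)) atTop (𝓝 b)) (hΨ' : Tendsto (deriv Ψ) atTop atTop) : b = 0 := by
  by_contra hb0
  have hb_pos : 0 < b := (hΦ.drift_nonneg hconv hdiff ht.le hb).lt_of_ne' hb0
  have hΦt : Tendsto (Φ t) atTop atTop :=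
    tendsto_atTop_of_eventually_le_deriv (half_pos hb_pos)
      (hb.eventually_const_le (half_lt_self hb_pos))
  have hΨ : Tendsto Ψ atTop atTop :=
    tendsto_atTop_of_eventually_le_deriv one_pos (hΨ'.eventually_ge_atTop 1)
  have hexp : Tendsto (fun M => Real.exp (-M * t)) atTop (𝓝 0) :=
    Real.tendsto_exp_atBot.comp (tendsto_neg_atTop_atBot.atBot_mul_const ht)
  exact hb_pos.not_ge (ge_of_tendsto' hexp fun M =>
    hΦ.drift_le_exp hconv hdiff ht.le hb hΦt (hΨ.eventually_gt_atTop 0)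
      (hΨ'.eventually_ge_atTop M))

theorem drift_eq_zero_iff (hΦ : IsBackwardFlow Ψ Φ) (hconv : ConvexOn ℝ (Ioi 0) Ψ)
    (hdiff : DifferentiableOn ℝ Ψ (Ioi 0)) (ht : 0 < t)
    (hb : Tendsto (deriv (Φ t)) atTop (𝓝 b)) : b = 0 ↔ Tendsto (deriv Ψ) atTop atTop :=
  ⟨fun h => hΦ.tendsto_deriv_of_drift_eq_zero hconv hdiff ht.le (h ▸ hb),
    hΦ.drift_eq_zero_of_tendsto_deriv hconv hdiff ht hb⟩

end IsBackwardFlow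

theorem mul_one_sub_exp_neg_mul_nonneg {u x : ℝ} (hu : 0 ≤ u) (hx : 0 ≤ x) :
    0 ≤ x * (1 - Real.exp (-(u * x))) :=
  mul_nonneg hx (sub_nonneg.2 (Real.exp_le_one_iff.2 (neg_nonpos.2 (mul_nonneg hu hx))))

theorem mul_one_sub_exp_neg_mul_le {u x : ℝ} (hx : 0 ≤ x) :
    x * (1 - Real.exp (-(u * x))) ≤ max 1 u * min x (x ^ 2) := by
  have h_le_one : 1 - Real.exp (-(u * x)) ≤ max 1 u :=
    (sub_le_self 1 (Real.exp_pos _).le).trans (le_max_left 1 u)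
  have h_le_mul : 1 - Real.exp (-(u * x)) ≤ max 1 u * x := by
    linarith [Real.add_one_le_exp (-(u * x)), mul_le_mul_of_nonneg_right (le_max_right 1 u) hx]
  rcases min_choice x (x ^ 2) with h | h <;> rw [h]
  · linarith [mul_le_mul_of_nonneg_left h_le_one hx]
  · linarith [mul_le_mul_of_nonneg_left h_le_mul hx]

theorem exp_neg_sub_one_add_nonneg (y : ℝ) : 0 ≤ Real.exp (-y) - 1 + y := by
  linarith [Real.add_one_le_exp (-y)]

theorem exp_neg_sub_one_add_le_mul (y : ℝ) :
    Real.exp (-y) - 1 + y ≤ y * (1 - Real.exp (-y)) := by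
  have h : (y + 1) * Real.exp (-y) ≤ Real.exp y * Real.exp (-y) := by
    gcongr
    exact Real.add_one_le_exp y
  rw [← Real.exp_add, add_neg_cancel, Real.exp_zero] at h
  linarith

theorem exp_neg_mul_sub_one_add_le {u x : ℝ} (hu : 0 ≤ u) (hx : 0 ≤ x) :
    Real.exp (-(u * x)) - 1 + u * x ≤ u * (max 1 u * min x (x ^ 2)) :=
  calc Real.exp (-(u * x)) - 1 + u * x ≤ u * x * (1 - Real.exp (-(u * x))) :=
        exp_neg_sub_one_add_le_mul _
    _ = u * (x * (1 - Real.exp (-(u * x)))) := mul_assoc _ _ _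
    _ ≤ u * (max 1 u * min x (x ^ 2)) :=
        mul_le_mul_of_nonneg_left (mul_one_sub_exp_neg_mul_le hx) hu

section JumpPart

variable {π : Measure ℝ} {u : ℝ}

theorem integrableOn_min_sq
    (hπ : ∫⁻ x in Ioi (0 : ℝ), ENNReal.ofReal (min x (x ^ 2)) ∂π < ⊤) :
    IntegrableOn (fun x : ℝ => min x (x ^ 2)) (Ioi 0) π := by
  refine ⟨by fun_prop, (hasFiniteIntegral_iff_ofReal ?_).2 hπ⟩
  filter_upwards [ae_restrict_mem measurableSet_Ioi] with x hx
  exact le_min (mem_Ioi.1 hx).le (sq_nonneg x)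

theorem integrableOn_exp_neg_mul_sub_one_add
    (hπ : IntegrableOn (fun x : ℝ => min x (x ^ 2)) (Ioi 0) π) (hu : 0 ≤ u) :
    IntegrableOn (fun x => Real.exp (-(u * x)) - 1 + u * x) (Ioi 0) π := by
  refine Integrable.mono' ((hπ.const_mul (max 1 u)).const_mul u) (by fun_prop) ?_
  filter_upwards [ae_restrict_mem measurableSet_Ioi] with x hx
  rw [Real.norm_of_nonneg (exp_neg_sub_one_add_nonneg _)]
  exact exp_neg_mul_sub_one_add_le hu (mem_Ioi.1 hx).le

theorem integral_exp_neg_mul_sub_one_add_le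
    (hπ : IntegrableOn (fun x : ℝ => min x (x ^ 2)) (Ioi 0) π) (hu : 0 ≤ u) :
    ∫ x in Ioi (0 : ℝ), (Real.exp (-(u * x)) - 1 + u * x) ∂π ≤
      u * (max 1 u * ∫ x in Ioi (0 : ℝ), min x (x ^ 2) ∂π) := by
  rw [← integral_const_mul, ← integral_const_mul]
  exact setIntegral_mono_on (integrableOn_exp_neg_mul_sub_one_add hπ hu)
    ((hπ.const_mul _).const_mul _) measurableSet_Ioi
    fun x hx => exp_neg_mul_sub_one_add_le hu (mem_Ioi.1 hx).le

theorem convexOn_integral_exp_neg_mul_sub_one_add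
    (hπ : IntegrableOn (fun x : ℝ => min x (x ^ 2)) (Ioi 0) π) :
    ConvexOn ℝ (Ici 0) fun u => ∫ x in Ioi (0 : ℝ), (Real.exp (-(u * x)) - 1 + u * x) ∂π := by
  refine integral_convexOn_of_integrand_ae (convex_Ici 0) (.of_forall fun x => ?_)
    fun u hu => integrableOn_exp_neg_mul_sub_one_add hπ hu
  have hlin : ConvexOn ℝ (Ici 0) fun u => u * x := (LinearMap.mulRight ℝ x).convexOn (convex_Ici 0)
  have hexp : ConvexOn ℝ (Ici 0) fun u => Real.exp (-(u * x)) :=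
    (convexOn_exp.comp_linearMap (-LinearMap.mulRight ℝ x)).subset (subset_univ _) (convex_Ici 0)
  exact (hexp.add_const (-1)).add hlin

theorem hasDerivAt_integral_exp_neg_mul_sub_one_add
    (hπ : IntegrableOn (fun x : ℝ => min x (x ^ 2)) (Ioi 0) π) (hu : 0 < u) :
    HasDerivAt (fun v => ∫ x in Ioi (0 : ℝ), (Real.exp (-(v * x)) - 1 + v * x) ∂π)
      (∫ x in Ioi (0 : ℝ), x * (1 - Real.exp (-(u * x))) ∂π) u := by
  refine (hasDerivAt_integral_of_dominated_loc_of_deriv_le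
    (F := fun v x => Real.exp (-(v * x)) - 1 + v * x)
    (F' := fun v x => x * (1 - Real.exp (-(v * x)))) (s := Ioo 0 (2 * u))
    (Ioo_mem_nhds hu (by linarith)) (.of_forall fun v => by fun_prop)
    (integrableOn_exp_neg_mul_sub_one_add hπ hu.le) (by fun_prop) ?_
    (hπ.const_mul (max 1 (2 * u))) (.of_forall fun x v _ => ?_)).2
  · filter_upwards [ae_restrict_mem measurableSet_Ioi] with x hx v hv
    have hx0 : 0 ≤ x := (mem_Ioi.1 hx).le
    rw [Real.norm_of_nonneg (mul_one_sub_exp_neg_mul_nonneg hv.1.le hx0)]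
    refine (mul_one_sub_exp_neg_mul_le hx0).trans ?_
    gcongr
    exact hv.2.le
  · have h := (hasDerivAt_id v).mul_const x
    exact ((h.neg.exp.sub_const 1).add h).congr_deriv (by simp only [id, Pi.neg_apply]; ring)

end JumpPart

/-- `Ψ` agrees on `(0, ∞)` with the branching mechanism of parameters `(α, β, π)`; only the
restriction of `π` to `(0, ∞)` matters. -/
structure IsBranchingMechanism (Ψ : ℝ → ℝ) (α β : ℝ) (π : Measure ℝ) : Prop where
  quadratic_nonneg : 0 ≤ β
  lintegral_lt_top : ∫⁻ x in Ioi (0 : ℝ), ENNReal.ofReal (min x (x ^ 2)) ∂π < ⊤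
  eq_add_integral : ∀ u, 0 < u →
    Ψ u = α * u + β * u ^ 2 + ∫ x in Ioi (0 : ℝ), (Real.exp (-(u * x)) - 1 + u * x) ∂π

namespace IsBranchingMechanism

variable {Ψ : ℝ → ℝ} {α β : ℝ} {π : Measure ℝ}

theorem convexOn (h : IsBranchingMechanism Ψ α β π) : ConvexOn ℝ (Ioi 0) Ψ := by
  have hlin : ConvexOn ℝ (Ioi 0) fun u => α * u := (LinearMap.mulLeft ℝ α).convexOn (convex_Ioi 0)
  have hsq : ConvexOn ℝ (Ioi 0) fun u : ℝ => β * u ^ 2 :=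
    (even_two.convexOn_pow.subset (subset_univ _) (convex_Ioi 0)).smul h.quadratic_nonneg
  have hint := (convexOn_integral_exp_neg_mul_sub_one_add
    (integrableOn_min_sq h.lintegral_lt_top)).subset Ioi_subset_Ici_self (convex_Ioi 0)
  exact ((hlin.add hsq).add hint).congr fun u hu => (h.eq_add_integral u hu).symm

theorem differentiableOn (h : IsBranchingMechanism Ψ α β π) :
    DifferentiableOn ℝ Ψ (Ioi 0) := by
  refine DifferentiableOn.congr (fun u hu => ?_) h.eq_add_integral
  have hint := hasDerivAt_integral_exp_neg_mul_sub_one_add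
    (integrableOn_min_sq h.lintegral_lt_top) hu
  exact (DifferentiableAt.add (by fun_prop) hint.differentiableAt).differentiableWithinAt

theorem exists_forall_Ioc_le_mul (h : IsBranchingMechanism Ψ α β π) (K : ℝ) :
    ∃ C, ∀ u ∈ Ioc 0 K, Ψ u ≤ C * u := by
  set I := ∫ x in Ioi (0 : ℝ), min x (x ^ 2) ∂π
  have hI : 0 ≤ I := setIntegral_nonneg measurableSet_Ioi fun x hx =>
    le_min (mem_Ioi.1 hx).le (sq_nonneg x)
  refine ⟨α + β * K + max 1 K * I, fun u ⟨hu, huK⟩ => ?_⟩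
  have hβ := h.quadratic_nonneg
  calc Ψ u ≤ α * u + β * u ^ 2 + u * (max 1 u * I) := by
        rw [h.eq_add_integral u hu]
        gcongr
        exact integral_exp_neg_mul_sub_one_add_le (integrableOn_min_sq h.lintegral_lt_top) hu.le
    _ = (α + β * u + max 1 u * I) * u := by ring
    _ ≤ (α + β * K + max 1 K * I) * u := by gcongr

theorem isBackwardFlow (h : IsBranchingMechanism Ψ α β π) {Φ : ℝ → ℝ → ℝ}
    (hinit : ∀ q, 0 < q → Φ 0 q = q)
    (htraj : ∀ q, 0 < q → IsBackwardTrajectory Ψ (fun t => Φ t q)) : IsBackwardFlow Ψ Φ where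
  zero_apply := hinit
  trajectory := htraj
  pos q hq t ht := by
    have h0 : 0 < Φ 0 q := (hinit q hq).symm ▸ hq
    exact (htraj q hq).pos (h.differentiableOn.continuousOn.continuousAt (Ioi_mem_nhds h0))
      h.exists_forall_Ioc_le_mul h0 ht

end IsBranchingMechanism

theorem drift_vanishes_iff_PsiPrime_unbounded_general {Ψ : ℝ → ℝ} {Φ : ℝ → ℝ → ℝ} {b : ℝ → ℝ}
    (hconv : ConvexOn ℝ (Ioi 0) Ψ) (hdiff : DifferentiableOn ℝ Ψ (Ioi 0))
    (hΦ : IsBackwardFlow Ψ Φ) (hb : ∀ t, 0 < t → Tendsto (deriv (Φ t)) atTop (𝓝 (b t))) :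
    ((∃ t : ℝ, 0 < t ∧ b t = 0) ↔ (∀ t : ℝ, 0 < t → b t = 0)) ∧
    ((∃ t : ℝ, 0 < t ∧ b t = 0) ↔ Tendsto (fun u => deriv Ψ u) atTop atTop) := by
  have hiff : ∀ t, 0 < t → (b t = 0 ↔ Tendsto (deriv Ψ) atTop atTop) := fun t ht =>
    hΦ.drift_eq_zero_iff hconv hdiff ht (hb t ht)
  have hall : Tendsto (deriv Ψ) atTop atTop → ∀ t, 0 < t → b t = 0 := fun h t ht =>
    (hiff t ht).2 h
  have hsome : (∃ t, 0 < t ∧ b t = 0) → Tendsto (deriv Ψ) atTop atTop := fun ⟨t, ht, h⟩ =>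
    (hiff t ht).1 h
  exact ⟨⟨fun h => hall (hsome h), fun h => ⟨1, one_pos, h 1 one_pos⟩⟩,
    ⟨hsome, fun h => ⟨1, one_pos, hall h 1 one_pos⟩⟩⟩

/-- for the backward flow `Φ` of a branching mechanism `Ψ`, the
drift coefficient `b_t = lim_{q→∞} ∂_q Φ(t,q)` vanishes for some `t > 0` iff it
vanishes for all `t > 0`, iff `Ψ'(u) → ∞` as `u → ∞`. -/
theorem drift_vanishes_iff_PsiPrime_unbounded
    (Ψ : ℝ → ℝ) (α β : ℝ) (π : Measure ℝ)
    (hβ : 0 ≤ β)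
    (hπfin : ∫⁻ x in Ioi (0:ℝ), ENNReal.ofReal (min x (x ^ 2)) ∂π < ⊤)
    (hΨ : ∀ u : ℝ, 0 < u →
      Ψ u = α * u + β * u ^ 2 + ∫ x in Ioi (0:ℝ), (Real.exp (-(u * x)) - 1 + u * x) ∂π)
    (Φ : ℝ → ℝ → ℝ)
    (hΦcont : ∀ q : ℝ, 0 < q → ContinuousOn (fun t => Φ t q) (Ici 0))
    (hΦinit : ∀ q : ℝ, 0 < q → Φ 0 q = q)
    (hΦode : ∀ q : ℝ, 0 < q → ∀ t : ℝ, 0 < t →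
      HasDerivAt (fun s => Φ s q) (-Ψ (Φ t q)) t)
    (b : ℝ → ℝ)
    (hb : ∀ t : ℝ, 0 < t →
      Tendsto (fun q => deriv (fun p => Φ t p) q) atTop (nhds (b t))) :
    ((∃ t : ℝ, 0 < t ∧ b t = 0) ↔ (∀ t : ℝ, 0 < t → b t = 0)) ∧
    ((∃ t : ℝ, 0 < t ∧ b t = 0) ↔ Tendsto (fun u => deriv Ψ u) atTop atTop) := by
  have hmech : IsBranchingMechanism Ψ α β π := ⟨hβ, hπfin, hΨ⟩
  exact drift_vanishes_iff_PsiPrime_unbounded_general hmech.convexOn hmech.differentiableOn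
    (hmech.isBackwardFlow hΦinit fun q hq => ⟨hΦcont q hq, hΦode q hq⟩) hb
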